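/- Under the point-mass contaminated model F = (1−ε)F₀ + ε δ_{K e₁} with 0 < ε < 1/2 and A > 3/2, the map s ↦ Kurt_F(⟨u, x⟩) (where u is any unit vector with u₁² = s, the value depending on u only through s) is strictly monotone on a neighborhood of s = 1 in [0,1]; consequently every unit vector u with u₁² = 1 (i.e., u = ±e₁, the direction of the contamination) is a local extremum, relative to the unit sphere, of the kurtosis of the projections u ↦ Kurt_F(⟨u, x⟩). -/

import Mathlib

open MeasureTheory
open scoped RealInnerProductSpace ENNReal

lemma aux_int {p : ℕ} (F₀ : Measure (EuclideanSpace ℝ (Fin p))) [IsProbabilityMeasure F₀]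
    (hmom : Integrable (fun x => ‖x‖ ^ 4) F₀) (v : EuclideanSpace ℝ (Fin p)) (hv : ‖v‖ = 1)
    (k : ℕ) (hk : k ≤ 4) : Integrable (fun x => (⟪v, x⟫ : ℝ) ^ k) F₀ := by
  refine Integrable.mono' (g := fun x => 1 + ‖x‖ ^ 4) ((integrable_const 1).add hmom) ?_ ?_
  · exact Continuous.aestronglyMeasurable (by fun_prop)
  · refine Filter.Eventually.of_forall fun x => ?_
    have h1 : |(⟪v, x⟫ : ℝ)| ≤ ‖x‖ := by
      have := abs_real_inner_le_norm v x
      rwa [hv, one_mul] at this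
    rw [Real.norm_eq_abs, abs_pow]
    have h2 : |(⟪v, x⟫ : ℝ)| ^ k ≤ ‖x‖ ^ k := pow_le_pow_left₀ (abs_nonneg _) h1 k
    have h0 := norm_nonneg x
    have h3 : ‖x‖ ^ k ≤ 1 + ‖x‖ ^ 4 := by
      rcases le_total ‖x‖ 1 with h | h
      · have := pow_le_one₀ h0 h (n := k)
        have : 0 ≤ ‖x‖ ^ 4 := by positivity
        linarith
      · have := pow_le_pow_right₀ h hk
        linarith
    exact h2.trans h3

lemma aux_rot {p : ℕ} (F₀ : Measure (EuclideanSpace ℝ (Fin p)))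
    (hrot : ∀ T : EuclideanSpace ℝ (Fin p) ≃ₗᵢ[ℝ] EuclideanSpace ℝ (Fin p),
      Measure.map (⇑T) F₀ = F₀) (v w : EuclideanSpace ℝ (Fin p)) (hv : ‖v‖ = ‖w‖)
    (k : ℕ) : ∫ x, (⟪v, x⟫ : ℝ) ^ k ∂F₀ = ∫ x, (⟪w, x⟫ : ℝ) ^ k ∂F₀ := by
  set T := (ℝ ∙ (v - w))ᗮ.reflection with hT
  have hTv : T v = w := Submodule.reflection_sub hv
  have h1 : ∫ x, (⟪w, x⟫ : ℝ) ^ k ∂F₀ = ∫ x, (⟪w, T x⟫ : ℝ) ^ k ∂F₀ := by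
    conv_lhs => rw [← hrot T]
    rw [integral_map]
    · exact T.continuous.aemeasurable
    · exact Continuous.aestronglyMeasurable (by fun_prop)
  rw [h1, ← hTv]
  simp only [LinearIsometryEquiv.inner_map_map]

lemma aux_odd {p : ℕ} (F₀ : Measure (EuclideanSpace ℝ (Fin p)))
    (hrot : ∀ T : EuclideanSpace ℝ (Fin p) ≃ₗᵢ[ℝ] EuclideanSpace ℝ (Fin p),
      Measure.map (⇑T) F₀ = F₀) (v : EuclideanSpace ℝ (Fin p))
    (k : ℕ) (hk : Odd k) : ∫ x, (⟪v, x⟫ : ℝ) ^ k ∂F₀ = 0 := by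
  have h := aux_rot F₀ hrot v (-v) (by simp) k
  simp only [inner_neg_left, hk.neg_pow, integral_neg] at h
  linarith

lemma aux_mono (A ε K : ℝ) (hA2 : 3 / 2 < A) (hε : 0 < ε) (hε2 : ε < 1 / 2) (hK : 0 < K)
    (G : ℝ → ℝ) (hG : G = fun s => (A + 6 * ε ^ 2 * K ^ 2 * s +
      (ε ^ 4 + ε * (1 - ε) ^ 3) * K ^ 4 * s ^ 2) / ((1 - ε) * (1 + ε * K ^ 2 * s) ^ 2)) :
    ∃ δ > (0 : ℝ),
        StrictMonoOn G (Set.Icc (1 - δ) 1) ∨ StrictAntiOn G (Set.Icc (1 - δ) 1) := by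
  have h1ε : 0 < 1 - ε := by linarith
  obtain ⟨P, hP⟩ : ∃ P, P = 6 * ε - 2 * A := ⟨_, rfl⟩
  obtain ⟨Q, hQ⟩ : ∃ Q, Q = 2 * (1 - 3 * ε) * K ^ 2 := ⟨_, rfl⟩
  have hP0 : P < 0 := by linarith
  have hd : ∀ s : ℝ, 0 ≤ s → HasDerivAt G (ε * K ^ 2 * (P + Q * s) /
      ((1 - ε) * (1 + ε * K ^ 2 * s) ^ 3)) s := by
    intro s hs
    have hpos : 0 < 1 + ε * K ^ 2 * s := by positivity
    have hn : HasDerivAt (fun s : ℝ => A + 6 * ε ^ 2 * K ^ 2 * s +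
      (ε ^ 4 + ε * (1 - ε) ^ 3) * K ^ 4 * s ^ 2) (6 * ε ^ 2 * K ^ 2 +
      (ε ^ 4 + ε * (1 - ε) ^ 3) * K ^ 4 * (2 * s)) s := by
      have a := ((hasDerivAt_id s).const_mul (6 * ε ^ 2 * K ^ 2)).const_add A
      have b := ((hasDerivAt_id s).pow 2).const_mul ((ε ^ 4 + ε * (1 - ε) ^ 3) * K ^ 4)
      exact (a.add b).congr_deriv (by simp)
    have hdn : HasDerivAt (fun s : ℝ => (1 - ε) * (1 + ε * K ^ 2 * s) ^ 2)
        ((1 - ε) * (2 * (1 + ε * K ^ 2 * s) * (ε * K ^ 2))) s := by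
      have a := ((hasDerivAt_id s).const_mul (ε * K ^ 2)).const_add 1
      exact ((a.pow 2).const_mul (1 - ε)).congr_deriv (by simp)
    have := hn.div hdn (by positivity)
    rw [hG]
    refine this.congr_deriv ?_
    rw [hP, hQ]
    field_simp
    ring
  have hcont : ∀ a : ℝ, 0 ≤ a → ContinuousOn G (Set.Icc a 1) := fun a ha s hs =>
    (hd s (ha.trans hs.1)).continuousAt.continuousWithinAt
  rcases le_or_gt (P + Q) 0 with h | h
  · refine ⟨1, one_pos, Or.inr ?_⟩
    refine strictAntiOn_of_deriv_neg (convex_Icc _ _) (hcont _ (by norm_num)) fun s hs => ?_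
    rw [interior_Icc] at hs
    obtain ⟨hs0, hs1⟩ := hs
    have hs0 : 0 < s := by linarith
    rw [(hd s hs0.le).deriv]
    have : P + Q * s < 0 := by nlinarith
    apply div_neg_of_neg_of_pos
    · exact mul_neg_of_pos_of_neg (by positivity) this
    · positivity
  · have hQ0 : 0 < Q := by linarith
    have hlt : (P + Q) / (2 * Q) ≤ 1 := by
      rw [div_le_one (by positivity)]; linarith
    refine ⟨(P + Q) / (2 * Q), by positivity, Or.inl ?_⟩
    refine strictMonoOn_of_deriv_pos (convex_Icc _ _) (hcont _ (by linarith)) fun s hs => ?_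
    rw [interior_Icc] at hs
    obtain ⟨hs0, hs1⟩ := hs
    have hs0' : 0 < s := by linarith
    rw [(hd s hs0'.le).deriv]
    have h2 : Q * (1 - (P + Q) / (2 * Q)) < Q * s := by gcongr
    have h3 : Q * (1 - (P + Q) / (2 * Q)) = Q - (P + Q) / 2 := by field_simp
    have : 0 < P + Q * s := by linarith
    positivity

/-- Under the point-mass contaminated model `F = (1−ε)F₀ + ε δ_{K e₁}` with
`0 < ε < 1/2` and `A > 3/2`, the kurtosis of the projection `⟪u, x⟫` depends on the unit
vector `u` only through `s = u₁²`, the resulting function of `s` is strictly monotone on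
a neighborhood of `s = 1` in `[0, 1]`, and consequently every unit vector `u` with
`u₁² = 1` (i.e. `u = ±e₁`, the direction of the contamination) is a local extremum of
the kurtosis of the projections relative to the unit sphere. -/
theorem contamination_direction_is_local_extremum {p : ℕ} (hp : 0 < p)
    (F₀ : Measure (EuclideanSpace ℝ (Fin p))) [IsProbabilityMeasure F₀]
    (hrot : ∀ T : EuclideanSpace ℝ (Fin p) ≃ₗᵢ[ℝ] EuclideanSpace ℝ (Fin p),
      Measure.map (⇑T) F₀ = F₀)
    (hmom : Integrable (fun x => ‖x‖ ^ 4) F₀)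
    (hcov : ∫ x, (x ⟨0, hp⟩) ^ 2 ∂F₀ = 1)
    (A : ℝ) (hA : A = ∫ x, (x ⟨0, hp⟩) ^ 4 ∂F₀) (hA2 : 3 / 2 < A)
    (ε K : ℝ) (hε : 0 < ε) (hε2 : ε < 1 / 2) (hK : 0 < K)
    (F : Measure (EuclideanSpace ℝ (Fin p)))
    (hF : F = ENNReal.ofReal (1 - ε) • F₀ +
      ENNReal.ofReal ε • Measure.dirac (K • EuclideanSpace.single (⟨0, hp⟩ : Fin p) 1))
    (kurt : EuclideanSpace ℝ (Fin p) → ℝ)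
    (hkurt : ∀ v, kurt v =
      (∫ x, (⟪v, x⟫ - ∫ y, ⟪v, y⟫ ∂F) ^ 4 ∂F) /
        (∫ x, (⟪v, x⟫ - ∫ y, ⟪v, y⟫ ∂F) ^ 2 ∂F) ^ 2) :
    ∃ G : ℝ → ℝ,
      (∀ u : EuclideanSpace ℝ (Fin p), ‖u‖ = 1 → kurt u = G (u ⟨0, hp⟩ ^ 2)) ∧
      (∃ δ > (0 : ℝ),
        StrictMonoOn G (Set.Icc (1 - δ) 1) ∨ StrictAntiOn G (Set.Icc (1 - δ) 1)) ∧
      (∀ u : EuclideanSpace ℝ (Fin p), ‖u‖ = 1 → u ⟨0, hp⟩ ^ 2 = 1 →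
        IsLocalMaxOn kurt (Metric.sphere (0 : EuclideanSpace ℝ (Fin p)) 1) u ∨
        IsLocalMinOn kurt (Metric.sphere (0 : EuclideanSpace ℝ (Fin p)) 1) u) := by
  have h1ε : 0 < 1 - ε := by linarith
  have hmix : ∀ f : EuclideanSpace ℝ (Fin p) → ℝ, Integrable f F₀ → ∫ x, f x ∂F =
      (1 - ε) * ∫ x, f x ∂F₀ + ε * f (K • EuclideanSpace.single (⟨0, hp⟩ : Fin p) 1) := by
    intro f hf
    rw [hF, integral_add_measure, integral_smul_measure, integral_smul_measure, integral_dirac,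
      ENNReal.toReal_ofReal h1ε.le, ENNReal.toReal_ofReal hε.le, smul_eq_mul, smul_eq_mul]
    · exact hf.smul_measure ENNReal.ofReal_ne_top
    · exact (integrable_dirac (by simp)).smul_measure ENNReal.ofReal_ne_top
  set e : EuclideanSpace ℝ (Fin p) := EuclideanSpace.single (⟨0, hp⟩ : Fin p) 1 with he
  have hen : ‖e‖ = 1 := by simp [he]
  have hve : ∀ v : EuclideanSpace ℝ (Fin p), (⟪v, e⟫ : ℝ) = v ⟨0, hp⟩ := by
    intro v; simp [he, EuclideanSpace.inner_single_right]
  have hev : ∀ v : EuclideanSpace ℝ (Fin p), (⟪e, v⟫ : ℝ) = v ⟨0, hp⟩ := by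
    intro v; rw [real_inner_comm, hve]
  obtain ⟨G, hG⟩ : ∃ G : ℝ → ℝ, G = fun s => (A + 6 * ε ^ 2 * K ^ 2 * s +
      (ε ^ 4 + ε * (1 - ε) ^ 3) * K ^ 4 * s ^ 2) / ((1 - ε) * (1 + ε * K ^ 2 * s) ^ 2) :=
    ⟨_, rfl⟩
  have hkG : ∀ u : EuclideanSpace ℝ (Fin p), ‖u‖ = 1 → kurt u = G (u ⟨0, hp⟩ ^ 2) := by
    intro u hu
    have hi := aux_int F₀ hmom u hu
    have i1 := hi 1 (by norm_num)
    have i2 := hi 2 (by norm_num)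
    have i3 := hi 3 (by norm_num)
    have i4 := hi 4 (by norm_num)
    have m1 := aux_odd F₀ hrot u 1 (by decide)
    have m3 := aux_odd F₀ hrot u 3 (by decide)
    have m2 := aux_rot F₀ hrot u e (hu.trans hen.symm) 2
    have m4 := aux_rot F₀ hrot u e (hu.trans hen.symm) 4
    simp only [hev] at m2 m4
    rw [hcov] at m2
    rw [← hA] at m4
    simp only [pow_one] at i1 m1
    have hmean : ∫ y, (⟪u, y⟫ : ℝ) ∂F = ε * K * u ⟨0, hp⟩ := by
      rw [hmix _ i1, m1, inner_smul_right, hve]; ring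
    rw [hkurt, hmean]
    have hue := hve u
    generalize u ⟨0, hp⟩ = a at hue ⊢
    have e2 : (fun x => ((⟪u, x⟫ : ℝ) - ε * K * a) ^ 2) = fun x =>
        (⟪u, x⟫ : ℝ) ^ 2 + ((-2 * (ε * K * a)) * ⟪u, x⟫ + (ε * K * a) ^ 2) := by
      ext x; ring
    have e4 : (fun x => ((⟪u, x⟫ : ℝ) - ε * K * a) ^ 4) = fun x =>
        (⟪u, x⟫ : ℝ) ^ 4 + ((-4 * (ε * K * a)) * ⟪u, x⟫ ^ 3 + (6 * (ε * K * a) ^ 2 * ⟪u, x⟫ ^ 2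
          + ((-4 * (ε * K * a) ^ 3) * ⟪u, x⟫ + (ε * K * a) ^ 4))) := by
      ext x; ring
    have c : ∀ r : ℝ, Integrable (fun _ : EuclideanSpace ℝ (Fin p) => r) F₀ :=
      fun r => integrable_const r
    have j1 : ∀ q r : ℝ, Integrable (fun x => q * (⟪u, x⟫ : ℝ) + r) F₀ :=
      fun q r => (i1.const_mul q).add (c r)
    have j2 : ∀ q q' r : ℝ, Integrable (fun x => q' * (⟪u, x⟫ : ℝ) ^ 2 + (q * (⟪u, x⟫ : ℝ) + r)) F₀ :=
      fun q q' r => (i2.const_mul q').add (j1 q r)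
    have j3 : ∀ q q' q'' r : ℝ, Integrable (fun x => q'' * (⟪u, x⟫ : ℝ) ^ 3 +
        (q' * (⟪u, x⟫ : ℝ) ^ 2 + (q * (⟪u, x⟫ : ℝ) + r))) F₀ :=
      fun q q' q'' r => (i3.const_mul q'').add (j2 q q' r)
    have I2 : Integrable (fun x => ((⟪u, x⟫ : ℝ) - ε * K * a) ^ 2) F₀ := by
      rw [e2]; exact i2.add (j1 _ _)
    have I4 : Integrable (fun x => ((⟪u, x⟫ : ℝ) - ε * K * a) ^ 4) F₀ := by
      rw [e4]; exact i4.add (j3 _ _ _ _)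
    have V2 : ∫ x, ((⟪u, x⟫ : ℝ) - ε * K * a) ^ 2 ∂F₀ = 1 + (ε * K * a) ^ 2 := by
      rw [e2, integral_add i2 (j1 _ _), integral_add (i1.const_mul _) (c _),
        integral_const_mul, m1, m2]
      simp
    have V4 : ∫ x, ((⟪u, x⟫ : ℝ) - ε * K * a) ^ 4 ∂F₀ =
        A + 6 * (ε * K * a) ^ 2 + (ε * K * a) ^ 4 := by
      rw [e4, integral_add i4 (j3 _ _ _ _), integral_add (i3.const_mul _) (j2 _ _ _),
        integral_add (i2.const_mul _) (j1 _ _), integral_add (i1.const_mul _) (c _),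
        integral_const_mul, integral_const_mul, integral_const_mul, m1, m2, m3, m4]
      simp
      ring
    have hin : (⟪u, K • e⟫ : ℝ) = K * a := by
      rw [inner_smul_right, hue]
    rw [hmix _ I4, hmix _ I2, V2, V4, hin, hG]
    have hpos : 0 < 1 + ε * K ^ 2 * a ^ 2 := by positivity
    have d2 : (1 - ε) * (1 + (ε * K * a) ^ 2) + ε * (K * a - ε * K * a) ^ 2 =
        (1 - ε) * (1 + ε * K ^ 2 * a ^ 2) := by ring
    rw [d2]
    simp only
    rw [div_eq_div_iff (by positivity) (by positivity)]
    ring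
  have hmono := aux_mono A ε K hA2 hε hε2 hK G hG
  refine ⟨G, hkG, hmono, ?_⟩
  intro u hu hu1
  obtain ⟨δ, hδ, hm⟩ := hmono
  have hle : ∀ v : EuclideanSpace ℝ (Fin p), ‖v‖ = 1 → v ⟨0, hp⟩ ^ 2 ≤ 1 := by
    intro v hv
    have := abs_real_inner_le_norm v e
    rw [hve, hv, hen, one_mul] at this
    exact (sq_le_one_iff_abs_le_one _).2 this
  have hev' : ∀ᶠ v in nhdsWithin u (Metric.sphere (0 : EuclideanSpace ℝ (Fin p)) 1),
      ‖v‖ = 1 ∧ v ⟨0, hp⟩ ^ 2 ∈ Set.Icc (1 - δ) 1 := by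
    have hc : Continuous fun v : EuclideanSpace ℝ (Fin p) => v ⟨0, hp⟩ ^ 2 := by fun_prop
    have h1 : ∀ᶠ v in nhds u, 1 - δ < v ⟨0, hp⟩ ^ 2 :=
      hc.continuousAt.eventually_const_lt (by show 1 - δ < u ⟨0, hp⟩ ^ 2; rw [hu1]; linarith)
    filter_upwards [self_mem_nhdsWithin, nhdsWithin_le_nhds h1] with v hv hv1
    have hv : ‖v‖ = 1 := by simpa using hv
    exact ⟨hv, hv1.le, hle v hv⟩
  have hmem : (1 : ℝ) ∈ Set.Icc (1 - δ) 1 := ⟨by linarith, le_rfl⟩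
  rcases hm with hm | hm
  · left
    filter_upwards [hev'] with v hv
    rw [hkG v hv.1, hkG u hu, hu1]
    exact hm.monotoneOn hv.2 hmem hv.2.2
  · right
    filter_upwards [hev'] with v hv
    rw [hkG v hv.1, hkG u hu, hu1]
    exact hm.antitoneOn hv.2 hmem hv.2.2
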